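/- arXiv:2404.15921 — 8 statements merged into one kernel-verified Lean document; each statement's English description precedes it below -/
import Mathlib

section
/- Let ℓ > 0 and let ρ be a real number with |ρ| ≤ arsinh(1/sinh(ℓ/2)). Then ℓ·cosh ρ ≤ 2·√(1 + sinh(ℓ/2)²). If moreover ℓ ≤ 2·arsinh(1), then ℓ·cosh ρ ≤ 2·√2. -/
/-!
Put `t = ℓ / 2`. At distance `arsinh (1 / sinh t)` from the geodesic, `cosh` equals `coth t`, so
`t * cosh ρ ≤ t * coth t ≤ cosh t`, the last step because `t ≤ sinh t`.
-/

section

open Real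

variable {t x ρ : ℝ}

theorem cosh_eq_sqrt_one_add_sinh_sq (t : ℝ) : cosh t = √(1 + sinh t ^ 2) := by
  rw [← cosh_arsinh, arsinh_sinh]

theorem cosh_le_sqrt_one_add_sq_of_abs_le_arsinh (h : |t| ≤ arsinh x) :
    cosh t ≤ √(1 + x ^ 2) := by
  rw [← cosh_arsinh, cosh_le_cosh]
  exact h.trans (le_abs_self _)

theorem sqrt_one_add_one_div_sinh_sq (ht : t ≠ 0) :
    √(1 + (1 / sinh t) ^ 2) = cosh t / |sinh t| := by
  have hsinh : sinh t ≠ 0 := sinh_ne_zero.2 ht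
  have hsq : 1 + (1 / sinh t) ^ 2 = (cosh t / sinh t) ^ 2 := by
    rw [div_pow (cosh t), cosh_sq]
    field_simp
  rw [hsq, sqrt_sq_eq_abs, abs_div, abs_of_pos (cosh_pos t)]

theorem mul_cosh_le_cosh_of_abs_le_arsinh_one_div_sinh (ht : 0 < t)
    (hρ : |ρ| ≤ arsinh (1 / sinh t)) : t * cosh ρ ≤ cosh t := by
  have hsinh : 0 < sinh t := sinh_pos_iff.2 ht
  have hcoth : cosh ρ ≤ cosh t / sinh t := by
    simpa only [sqrt_one_add_one_div_sinh_sq ht.ne', abs_of_pos hsinh] using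
      cosh_le_sqrt_one_add_sq_of_abs_le_arsinh hρ
  calc
    t * cosh ρ ≤ sinh t * (cosh t / sinh t) :=
      mul_le_mul (self_le_sinh_iff.2 ht.le) hcoth (cosh_pos ρ).le hsinh.le
    _ = cosh t := mul_div_cancel₀ _ hsinh.ne'

end

/-- circles in the collar neighbourhood have length at most
`2√(1 + sinh(ℓ/2)²)`, and at most `2√2` when `ℓ ≤ 2 arsinh 1`. -/
theorem collar_circle_length (ℓ ρ : ℝ) (hℓ : 0 < ℓ)
    (hρ : |ρ| ≤ Real.arsinh (1 / Real.sinh (ℓ / 2))) :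
    ℓ * Real.cosh ρ ≤ 2 * Real.sqrt (1 + Real.sinh (ℓ / 2) ^ 2) ∧
      (ℓ ≤ 2 * Real.arsinh 1 → ℓ * Real.cosh ρ ≤ 2 * Real.sqrt 2) := by
  have hlength : ℓ * Real.cosh ρ ≤ 2 * Real.cosh (ℓ / 2) := by
    linarith [mul_cosh_le_cosh_of_abs_le_arsinh_one_div_sinh (half_pos hℓ) hρ]
  rw [← cosh_eq_sqrt_one_add_sinh_sq]
  refine ⟨hlength, fun hshort => hlength.trans ?_⟩
  have hhalf : |ℓ / 2| ≤ Real.arsinh 1 := by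
    rw [abs_of_pos (half_pos hℓ)]
    linarith
  have hcosh : Real.cosh (ℓ / 2) ≤ Real.sqrt 2 := by
    simpa only [one_pow, one_add_one_eq_two] using
      cosh_le_sqrt_one_add_sq_of_abs_le_arsinh hhalf
  linarith
end

section
/- For every point z of the hyperbolic upper half-plane, the hyperbolic distance from z to the imaginary axis equals arsinh(|re z| / im z); that is, the metric infimum distance from z to the set { w in the upper half-plane : re w = 0 } is arsinh(|re z| / im z). -/
/-! A Euclidean half-circle centred at `a ∈ ℝ` is a geodesic perpendicular to the vertical geodesic
`re = a`, so the foot of the perpendicular from `z` to that geodesic is `p = a + i ‖z - a‖`. For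
`w` with `re w = a`, the hyperbolic Pythagorean theorem
`cosh (dist z w) = cosh (dist z p) * cosh (dist p w)` shows that `p` is the point nearest to `z`. -/

open Real UpperHalfPlane

/-- The foot of the hyperbolic perpendicular from `z` to the vertical geodesic `re = a`. -/
noncomputable def verticalProj (a : ℝ) (z : ℍ) : ℍ :=
  ⟨⟨a, √((z.re - a) ^ 2 + z.im ^ 2)⟩, Real.sqrt_pos.2 (by positivity)⟩

@[simp]
lemma verticalProj_re (a : ℝ) (z : ℍ) : (verticalProj a z).re = a := rfl

lemma verticalProj_im_sq (a : ℝ) (z : ℍ) :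
    (verticalProj a z).im ^ 2 = (z.re - a) ^ 2 + z.im ^ 2 :=
  Real.sq_sqrt (by positivity)

lemma cosh_dist_verticalProj (a : ℝ) (z : ℍ) :
    cosh (dist z (verticalProj a z)) = (verticalProj a z).im / z.im := by
  rw [cosh_dist', verticalProj_re, ← verticalProj_im_sq]
  field_simp
  ring

lemma sinh_dist_verticalProj (a : ℝ) (z : ℍ) :
    sinh (dist z (verticalProj a z)) = |z.re - a| / z.im := by
  have hsq : sinh (dist z (verticalProj a z)) ^ 2 = (|z.re - a| / z.im) ^ 2 := by
    rw [sinh_sq, cosh_dist_verticalProj, div_pow, verticalProj_im_sq, div_pow, sq_abs]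
    field_simp
    ring
  exact (sq_eq_sq₀ (sinh_nonneg_iff.2 dist_nonneg) (by positivity)).1 hsq

lemma dist_verticalProj (a : ℝ) (z : ℍ) :
    dist z (verticalProj a z) = arsinh (|z.re - a| / z.im) := by
  rw [← sinh_dist_verticalProj, arsinh_sinh]

lemma cosh_dist_eq_cosh_dist_verticalProj_mul (z w : ℍ) :
    cosh (dist z w) =
      cosh (dist z (verticalProj w.re z)) * cosh (dist (verticalProj w.re z) w) := by
  rw [cosh_dist_verticalProj, cosh_dist', cosh_dist', verticalProj_re, ← verticalProj_im_sq]
  field_simp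
  ring

lemma dist_verticalProj_le_dist (z w : ℍ) : dist z (verticalProj w.re z) ≤ dist z w := by
  have hcosh : cosh (dist z (verticalProj w.re z)) ≤ cosh (dist z w) := by
    rw [cosh_dist_eq_cosh_dist_verticalProj_mul z w]
    exact le_mul_of_one_le_right (cosh_pos _).le (one_le_cosh _)
  simpa only [cosh_le_cosh, abs_dist] using hcosh

lemma infDist_eq_dist_verticalProj (a : ℝ) (z : ℍ) :
    Metric.infDist z {w : ℍ | w.re = a} = dist z (verticalProj a z) := by
  have hmem : verticalProj a z ∈ {w : ℍ | w.re = a} := verticalProj_re a z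
  refine le_antisymm (Metric.infDist_le_dist_of_mem hmem) ((Metric.le_infDist ⟨_, hmem⟩).2 ?_)
  rintro w rfl
  exact dist_verticalProj_le_dist z w

theorem infDist_imaginary_axis_general (a : ℝ) (z : ℍ) :
    Metric.infDist z {w : ℍ | w.re = a} = arsinh (|z.re - a| / z.im) := by
  rw [infDist_eq_dist_verticalProj, dist_verticalProj]

/-- the hyperbolic distance from a point `z` of the upper half-plane to the
imaginary axis equals `arsinh (|re z| / im z)`. -/
theorem infDist_imaginary_axis (z : UpperHalfPlane) :
    Metric.infDist z {w : UpperHalfPlane | w.re = 0} = Real.arsinh (|z.re| / z.im) := by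
  simpa only [sub_zero] using infDist_imaginary_axis_general 0 z
end

section
/- Let a, b, c > 0 and let L ≥ 0 satisfy cosh L = F(a,b,c). Then L ≥ log( (cosh(a/2)·cosh(b/2)) / (sinh(a/2)·sinh(b/2)) ); in particular L ≥ log( cosh(a/2)/sinh(a/2) ). -/
/-- The right-angled hexagon expression: `cosh` of the length of the common perpendicular
between the boundary components of lengths `a` and `b` in a pair of pants with boundary
lengths `a`, `b`, `c`. -/
noncomputable def pantsPerp (a b c : ℝ) : ℝ :=
  (Real.cosh (c / 2) + Real.cosh (a / 2) * Real.cosh (b / 2)) /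
    (Real.sinh (a / 2) * Real.sinh (b / 2))

theorem cosh_le_exp_iff {x : ℝ} : Real.cosh x ≤ Real.exp x ↔ 0 ≤ x := by
  rw [← Real.cosh_add_sinh, le_add_iff_nonneg_right, Real.sinh_nonneg_iff]

theorem log_le_of_le_cosh {x y : ℝ} (hx : 0 ≤ x) (hy : 0 < y) (hyx : y ≤ Real.cosh x) :
    Real.log y ≤ x :=
  (Real.log_le_iff_le_exp hy).2 (hyx.trans (cosh_le_exp_iff.2 hx))

theorem one_lt_cosh_div_sinh {x : ℝ} (hx : 0 < x) : 1 < Real.cosh x / Real.sinh x :=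
  (one_lt_div (Real.sinh_pos_iff.2 hx)).2 (Real.sinh_lt_cosh x)

theorem cosh_div_sinh_lt_cosh_mul_cosh_div_sinh_mul_sinh {x y : ℝ} (hx : 0 < x) (hy : 0 < y) :
    Real.cosh x / Real.sinh x <
      (Real.cosh x * Real.cosh y) / (Real.sinh x * Real.sinh y) := by
  rw [mul_div_mul_comm]
  exact lt_mul_of_one_lt_right (zero_lt_one.trans (one_lt_cosh_div_sinh hx))
    (one_lt_cosh_div_sinh hy)

theorem cosh_mul_cosh_div_sinh_mul_sinh_lt_pantsPerp {a b : ℝ} (ha : 0 < a) (hb : 0 < b)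
    (c : ℝ) :
    (Real.cosh (a / 2) * Real.cosh (b / 2)) / (Real.sinh (a / 2) * Real.sinh (b / 2)) <
      pantsPerp a b c :=
  div_lt_div_of_pos_right (lt_add_of_pos_left _ (Real.cosh_pos (c / 2)))
    (mul_pos (Real.sinh_pos_iff.2 (half_pos ha)) (Real.sinh_pos_iff.2 (half_pos hb)))

/-- lower bound for the length of the common perpendicular. -/
theorem perp_length_lower_bound (a b c L : ℝ) (ha : 0 < a) (hb : 0 < b) (hc : 0 < c)
    (hL : 0 ≤ L) (h : Real.cosh L = pantsPerp a b c) :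
    L ≥ Real.log ((Real.cosh (a / 2) * Real.cosh (b / 2)) /
        (Real.sinh (a / 2) * Real.sinh (b / 2))) ∧
      L ≥ Real.log (Real.cosh (a / 2) / Real.sinh (a / 2)) := by
  have coth_pos : 0 < Real.cosh (a / 2) / Real.sinh (a / 2) :=
    zero_lt_one.trans (one_lt_cosh_div_sinh (half_pos ha))
  have coth_lt_prod :=
    cosh_div_sinh_lt_cosh_mul_cosh_div_sinh_mul_sinh (half_pos ha) (half_pos hb)
  have prod_lt_cosh := h ▸ cosh_mul_cosh_div_sinh_mul_sinh_lt_pantsPerp ha hb c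
  exact ⟨log_le_of_le_cosh hL (coth_pos.trans coth_lt_prod) prod_lt_cosh.le,
    log_le_of_le_cosh hL coth_pos (coth_lt_prod.trans prod_lt_cosh).le⟩
end

section
/- Let 0 < a ≤ a', 0 < b ≤ b', and 0 < c ≤ c' be real numbers. Then F(a,b,c) / F(a',b',c') ≤ ( sinh(a'/2)·sinh(b'/2) ) / ( sinh(a/2)·sinh(b/2) ). -/
/-! Multiplying by `sinh (a / 2) * sinh (b / 2)` clears the denominator of `pantsPerp a b c`; what
remains is built from values of `cosh`, hence grows with each boundary length. The theorem is this
monotonicity, divided by positive quantities. -/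

section

variable {a a' b b' c c' x x' y y' z z' : ℝ}

theorem cosh_add_cosh_mul_cosh_le_of_abs_le (hx : |x| ≤ |x'|) (hy : |y| ≤ |y'|)
    (hz : |z| ≤ |z'|) :
    Real.cosh z + Real.cosh x * Real.cosh y ≤ Real.cosh z' + Real.cosh x' * Real.cosh y' := by
  rw [← Real.cosh_le_cosh] at hx hy hz
  gcongr

theorem sinh_half_mul_sinh_half_pos (ha : 0 < a) (hb : 0 < b) :
    0 < Real.sinh (a / 2) * Real.sinh (b / 2) :=
  mul_pos (Real.sinh_pos_iff.2 (half_pos ha)) (Real.sinh_pos_iff.2 (half_pos hb))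

theorem pantsPerp_pos (c : ℝ) (ha : 0 < a) (hb : 0 < b) : 0 < pantsPerp a b c :=
  div_pos (by positivity) (sinh_half_mul_sinh_half_pos ha hb)

theorem pantsPerp_mul_sinh_mul_sinh (c : ℝ) (ha : a ≠ 0) (hb : b ≠ 0) :
    pantsPerp a b c * (Real.sinh (a / 2) * Real.sinh (b / 2)) =
      Real.cosh (c / 2) + Real.cosh (a / 2) * Real.cosh (b / 2) :=
  div_mul_cancel₀ _ (by simp [ha, hb])

theorem pantsPerp_mul_sinh_mul_sinh_le_of_abs_le (ha : a ≠ 0) (hb : b ≠ 0)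
    (haa' : |a| ≤ |a'|) (hbb' : |b| ≤ |b'|) (hcc' : |c| ≤ |c'|) :
    pantsPerp a b c * (Real.sinh (a / 2) * Real.sinh (b / 2)) ≤
      pantsPerp a' b' c' * (Real.sinh (a' / 2) * Real.sinh (b' / 2)) := by
  have ha' : a' ≠ 0 := abs_pos.1 ((abs_pos.2 ha).trans_le haa')
  have hb' : b' ≠ 0 := abs_pos.1 ((abs_pos.2 hb).trans_le hbb')
  have abs_half_le {s t : ℝ} (h : |s| ≤ |t|) : |s / 2| ≤ |t / 2| := by
    simpa only [abs_div] using div_le_div_of_nonneg_right h (abs_nonneg 2)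
  rw [pantsPerp_mul_sinh_mul_sinh c ha hb, pantsPerp_mul_sinh_mul_sinh c' ha' hb']
  exact cosh_add_cosh_mul_cosh_le_of_abs_le (abs_half_le haa') (abs_half_le hbb')
    (abs_half_le hcc')

end

/-- comparison of perpendicular lengths when the boundary lengths are
weakly increased. -/
theorem perp_ratio_bound (a a' b b' c c' : ℝ)
    (ha : 0 < a) (ha' : a ≤ a') (hb : 0 < b) (hb' : b ≤ b') (hc : 0 < c) (hc' : c ≤ c') :
    pantsPerp a b c / pantsPerp a' b' c' ≤
      (Real.sinh (a' / 2) * Real.sinh (b' / 2)) / (Real.sinh (a / 2) * Real.sinh (b / 2)) := by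
  rw [div_le_div_iff₀ (pantsPerp_pos c' (ha.trans_le ha') (hb.trans_le hb'))
    (sinh_half_mul_sinh_half_pos ha hb), mul_comm (_ * _) (pantsPerp a' b' c')]
  exact pantsPerp_mul_sinh_mul_sinh_le_of_abs_le ha.ne' hb.ne' (abs_le_abs_of_nonneg ha.le ha')
    (abs_le_abs_of_nonneg hb.le hb') (abs_le_abs_of_nonneg hc.le hc')
end

section
/- Let a₀ := exp(−√2) and m := log( cosh(a₀/2) / sinh(a₀/2) ). There exists a constant C > 0 such that for all real numbers s, x, y with 0 < s ≤ a₀, y ≥ m, and x − y ≤ log 2 + 2·log( sinh(a₀/2) / sinh(s/2) ), one has x ≤ C·(−log s)·y. -/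
/-- The universal constant `a₀ = exp (-√2)` of the paper's Convention. -/
noncomputable def a₀ : ℝ := Real.exp (-Real.sqrt 2)

/-- The lower bound `m = log (cosh (a₀/2) / sinh (a₀/2))` for the perpendicular length. -/
noncomputable def mConst : ℝ := Real.log (Real.cosh (a₀ / 2) / Real.sinh (a₀ / 2))

/-!
Since `t ≤ sinh t` and `sinh u ≤ exp u / 2`, the additive error `x - y` is at most
`log 2 + a - 2 log s`, which is affine in `-log s`. As `-log s` and `y` stay away from zero,
each of the terms `y`, `log 2 + a` and `-2 log s` is at most a constant multiple of the product
`(-log s) * y`.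
-/

lemma log_cosh_div_sinh_pos {t : ℝ} (ht : 0 < t) : 0 < Real.log (Real.cosh t / Real.sinh t) :=
  Real.log_pos <| (one_lt_div (Real.sinh_pos_iff.2 ht)).2 (Real.sinh_lt_cosh t)

lemma log_le_log_sinh {t : ℝ} (ht : 0 < t) : Real.log t ≤ Real.log (Real.sinh t) :=
  Real.log_le_log ht (Real.self_le_sinh_iff.2 ht.le)

lemma sinh_le_exp_div_two (u : ℝ) : Real.sinh u ≤ Real.exp u / 2 := by
  rw [Real.sinh_eq]
  linarith [Real.exp_pos (-u)]

lemma log_sinh_le {u : ℝ} (hu : 0 < u) : Real.log (Real.sinh u) ≤ u - Real.log 2 :=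
  calc
    Real.log (Real.sinh u) ≤ Real.log (Real.exp u / 2) :=
      Real.log_le_log (Real.sinh_pos_iff.2 hu) (sinh_le_exp_div_two u)
    _ = u - Real.log 2 := by rw [Real.log_div (Real.exp_ne_zero u) two_ne_zero, Real.log_exp]

lemma log_sinh_div_sinh_le {u t : ℝ} (hu : 0 < u) (ht : 0 < t) :
    Real.log (Real.sinh u / Real.sinh t) ≤ u - Real.log (2 * t) := by
  rw [Real.log_div (Real.sinh_pos_iff.2 hu).ne' (Real.sinh_pos_iff.2 ht).ne',
    Real.log_mul two_ne_zero ht.ne']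
  linarith [log_sinh_le hu, log_le_log_sinh ht]

lemma add_add_mul_le_mul_mul {𝕜 : Type*} [Field 𝕜] [LinearOrder 𝕜] [IsStrictOrderedRing 𝕜]
    {l L m y b k : 𝕜} (hl : 0 < l) (hL : l ≤ L) (hm : 0 < m) (hy : m ≤ y)
    (hb : 0 ≤ b) (hk : 0 ≤ k) :
    y + b + k * L ≤ (1 / l + b / (l * m) + k / m) * L * y := by
  have hL₀ : 0 < L := hl.trans_le hL
  have hy₀ : 0 < y := hm.trans_le hy
  have one_le_L_div : 1 ≤ L / l := (one_le_div hl).2 hL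
  have one_le_y_div : 1 ≤ y / m := (one_le_div hm).2 hy
  calc
    y + b + k * L = y * 1 + b * (1 * 1) + k * L * 1 := by ring
    _ ≤ y * (L / l) + b * (L / l * (y / m)) + k * L * (y / m) := by gcongr
    _ = (1 / l + b / (l * m) + k / m) * L * y := by field_simp

theorem perp_ratio_log_sys_bound_general {a m : ℝ} (ha₀ : 0 < a) (ha₁ : a < 1) (hm : 0 < m) :
    ∃ C : ℝ, 0 < C ∧ ∀ s x y : ℝ, 0 < s → s ≤ a → m ≤ y →
      x - y ≤ Real.log 2 + 2 * Real.log (Real.sinh (a / 2) / Real.sinh (s / 2)) →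
      x ≤ C * (-Real.log s) * y := by
  have neg_log_a_pos : 0 < -Real.log a := neg_pos.2 (Real.log_neg ha₀ ha₁)
  have intercept_pos : 0 < Real.log 2 + a := add_pos (Real.log_pos one_lt_two) ha₀
  refine ⟨1 / -Real.log a + (Real.log 2 + a) / (-Real.log a * m) + 2 / m, by positivity, ?_⟩
  intro s x y hs hsa hy hxy
  have neg_log_le : -Real.log a ≤ -Real.log s := neg_le_neg (Real.log_le_log hs hsa)
  have log_ratio_le : Real.log (Real.sinh (a / 2) / Real.sinh (s / 2)) ≤ a / 2 - Real.log s := by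
    simpa only [mul_div_cancel₀ s (two_ne_zero' ℝ)] using
      log_sinh_div_sinh_le (half_pos ha₀) (half_pos hs)
  calc
    x ≤ y + (Real.log 2 + a) + 2 * -Real.log s := by linarith
    _ ≤ _ := add_add_mul_le_mul_mul neg_log_a_pos neg_log_le hm hy intercept_pos.le zero_le_two

lemma a₀_pos : 0 < a₀ := Real.exp_pos _

lemma a₀_lt_one : a₀ < 1 := Real.exp_lt_one_iff.2 (neg_neg_of_pos (Real.sqrt_pos.2 two_pos))

lemma mConst_pos : 0 < mConst := log_cosh_div_sinh_pos (half_pos a₀_pos)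

/-- the real-variable form of estimate (9) in the proof of Lemma 3.1. -/
theorem perp_ratio_log_sys_bound :
    ∃ C : ℝ, 0 < C ∧ ∀ s x y : ℝ, 0 < s → s ≤ a₀ → mConst ≤ y →
      x - y ≤ Real.log 2 + 2 * Real.log (Real.sinh (a₀ / 2) / Real.sinh (s / 2)) →
      x ≤ C * (-Real.log s) * y :=
  perp_ratio_log_sys_bound_general a₀_pos a₀_lt_one mConst_pos
end

section
/- For every m > 0 there exist constants c₂ ≥ c₁ > 0, depending only on m, with the following property: for all real numbers ρ₁, ρ₂, all h ≥ m, and all L ≥ 0 satisfying cosh L = cosh ρ₁ · cosh ρ₂ · cosh h − sinh ρ₁ · sinh ρ₂, one has c₁·( |ρ₁| + |ρ₂| + h ) ≤ L ≤ c₂·( |ρ₁| + |ρ₂| + h ). -/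
/-!
By the subtraction formula, `cosh L = cosh (ρ₁ - ρ₂) + (cosh h - 1) * (cosh ρ₁ * cosh ρ₂)`, a sum
of positive terms. Since `cosh (ρ₁ - ρ₂)` and `cosh ρ₁ * cosh ρ₂` lie between `1` and
`cosh (|ρ₁| + |ρ₂|)`, this gives `h ≤ L ≤ |ρ₁| + |ρ₂| + h`. Keeping only the second term and
comparing with exponentials gives `|ρ₁| + |ρ₂| ≤ L + K` with `K` depending only on `m`; the
additive error is absorbed into a multiplicative constant because `m ≤ h ≤ L`.
-/

section

open Real

theorem cosh_mul_cosh_le_cosh_abs_add_abs (x y : ℝ) :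
    cosh x * cosh y ≤ cosh (|x| + |y|) := by
  rw [cosh_add, cosh_abs, cosh_abs]
  exact le_add_of_nonneg_right <|
    mul_nonneg (sinh_nonneg_iff.2 (abs_nonneg x)) (sinh_nonneg_iff.2 (abs_nonneg y))

theorem cosh_le_exp_abs (x : ℝ) : cosh x ≤ exp |x| := by
  rw [← cosh_abs, ← cosh_add_sinh]
  exact le_add_of_nonneg_right (sinh_nonneg_iff.2 (abs_nonneg x))

theorem exp_abs_le_two_mul_cosh (x : ℝ) : exp |x| ≤ 2 * cosh x := by
  linarith [exp_abs_le x, cosh_eq x]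

/-- The hyperbolic cosine of the length of an arc in the hyperbolic plane. The arc joins the points
at signed distances `ρ₁` and `ρ₂` from the two ends of a geodesic segment of length `h`, along the
geodesics perpendicular to it there; positive distances lie on the same side of the segment. -/
noncomputable def coshArcLength (ρ₁ ρ₂ h : ℝ) : ℝ :=
  cosh ρ₁ * cosh ρ₂ * cosh h - sinh ρ₁ * sinh ρ₂

variable {ρ₁ ρ₂ h m L : ℝ}

theorem coshArcLength_eq_cosh_sub_add (ρ₁ ρ₂ h : ℝ) :
    coshArcLength ρ₁ ρ₂ h = cosh (ρ₁ - ρ₂) + (cosh h - 1) * (cosh ρ₁ * cosh ρ₂) := by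
  rw [coshArcLength, cosh_sub]
  ring

theorem coshArcLength_le_cosh_abs_add (ρ₁ ρ₂ h : ℝ) :
    coshArcLength ρ₁ ρ₂ h ≤ cosh (|ρ₁| + |ρ₂| + |h|) := by
  have difference_le : cosh (ρ₁ - ρ₂) ≤ cosh (|ρ₁| + |ρ₂|) :=
    cosh_le_cosh.2 ((abs_sub ρ₁ ρ₂).trans (le_abs_self _))
  calc
    coshArcLength ρ₁ ρ₂ h
      = cosh (ρ₁ - ρ₂) + (cosh h - 1) * (cosh ρ₁ * cosh ρ₂) :=
        coshArcLength_eq_cosh_sub_add ρ₁ ρ₂ h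
    _ ≤ cosh (|ρ₁| + |ρ₂|) + (cosh h - 1) * cosh (|ρ₁| + |ρ₂|) :=
        add_le_add difference_le <| mul_le_mul_of_nonneg_left
          (cosh_mul_cosh_le_cosh_abs_add_abs ρ₁ ρ₂) (sub_nonneg.2 (one_le_cosh h))
    _ = cosh (|ρ₁| + |ρ₂|) * cosh h := by ring
    _ ≤ cosh (|ρ₁| + |ρ₂| + |h|) := by
        simpa only [abs_of_nonneg (add_nonneg (abs_nonneg ρ₁) (abs_nonneg ρ₂))] using
          cosh_mul_cosh_le_cosh_abs_add_abs (|ρ₁| + |ρ₂|) h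

theorem cosh_le_coshArcLength (ρ₁ ρ₂ h : ℝ) : cosh h ≤ coshArcLength ρ₁ ρ₂ h := by
  have one_le_product : 1 ≤ cosh ρ₁ * cosh ρ₂ :=
    one_le_mul_of_one_le_of_one_le (one_le_cosh ρ₁) (one_le_cosh ρ₂)
  have le_product : cosh h - 1 ≤ (cosh h - 1) * (cosh ρ₁ * cosh ρ₂) :=
    le_mul_of_one_le_right (sub_nonneg.2 (one_le_cosh h)) one_le_product
  linarith [coshArcLength_eq_cosh_sub_add ρ₁ ρ₂ h, one_le_cosh (ρ₁ - ρ₂)]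

theorem mul_exp_abs_add_abs_le_coshArcLength (ρ₁ ρ₂ h : ℝ) :
    (cosh h - 1) / 4 * exp (|ρ₁| + |ρ₂|) ≤ coshArcLength ρ₁ ρ₂ h := by
  have cosh_sub_one_nonneg : 0 ≤ cosh h - 1 := sub_nonneg.2 (one_le_cosh h)
  calc
    (cosh h - 1) / 4 * exp (|ρ₁| + |ρ₂|)
      = (cosh h - 1) / 4 * (exp |ρ₁| * exp |ρ₂|) := by rw [exp_add]
    _ ≤ (cosh h - 1) / 4 * (2 * cosh ρ₁ * (2 * cosh ρ₂)) := by
        gcongr <;> exact exp_abs_le_two_mul_cosh _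
    _ = (cosh h - 1) * (cosh ρ₁ * cosh ρ₂) := by ring
    _ ≤ cosh (ρ₁ - ρ₂) + (cosh h - 1) * (cosh ρ₁ * cosh ρ₂) :=
        le_add_of_nonneg_left (cosh_pos _).le
    _ = coshArcLength ρ₁ ρ₂ h := (coshArcLength_eq_cosh_sub_add ρ₁ ρ₂ h).symm

theorem abs_le_abs_add_of_cosh_eq (hL : cosh L = coshArcLength ρ₁ ρ₂ h) :
    |L| ≤ |ρ₁| + |ρ₂| + |h| := by
  have cosh_le := hL.trans_le (coshArcLength_le_cosh_abs_add ρ₁ ρ₂ h)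
  rwa [cosh_le_cosh, abs_of_nonneg (by positivity : 0 ≤ |ρ₁| + |ρ₂| + |h|)] at cosh_le

theorem abs_le_abs_of_cosh_eq (hL : cosh L = coshArcLength ρ₁ ρ₂ h) : |h| ≤ |L| :=
  cosh_le_cosh.1 ((cosh_le_coshArcLength ρ₁ ρ₂ h).trans_eq hL.symm)

theorem abs_add_abs_add_log_le_of_cosh_eq (hh : h ≠ 0)
    (hL : cosh L = coshArcLength ρ₁ ρ₂ h) :
    |ρ₁| + |ρ₂| + log ((cosh h - 1) / 4) ≤ |L| := by
  have factor_pos : 0 < (cosh h - 1) / 4 := by linarith [one_lt_cosh.2 hh]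
  rw [← exp_le_exp, exp_add, exp_log factor_pos, mul_comm]
  calc
    (cosh h - 1) / 4 * exp (|ρ₁| + |ρ₂|) ≤ coshArcLength ρ₁ ρ₂ h :=
      mul_exp_abs_add_abs_le_coshArcLength ρ₁ ρ₂ h
    _ = cosh L := hL.symm
    _ ≤ exp |L| := cosh_le_exp_abs L

theorem abs_add_abs_le_add_abs_log_of_cosh_eq (hm : 0 < m) (hmh : m ≤ |h|)
    (hL : cosh L = coshArcLength ρ₁ ρ₂ h) :
    |ρ₁| + |ρ₂| ≤ |L| + |log ((cosh m - 1) / 4)| := by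
  have factor_pos : 0 < (cosh m - 1) / 4 := by linarith [one_lt_cosh.2 hm.ne']
  have cosh_le : cosh m ≤ cosh h := cosh_le_cosh.2 ((abs_of_pos hm).trans_le hmh)
  have log_le : log ((cosh m - 1) / 4) ≤ log ((cosh h - 1) / 4) :=
    log_le_log factor_pos (by gcongr)
  have additive_bound := abs_add_abs_add_log_le_of_cosh_eq (abs_pos.1 (hm.trans_le hmh)) hL
  linarith [neg_abs_le (log ((cosh m - 1) / 4))]

theorem abs_add_le_mul_abs_of_cosh_eq (hm : 0 < m) (hmh : m ≤ |h|)
    (hL : cosh L = coshArcLength ρ₁ ρ₂ h) :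
    |ρ₁| + |ρ₂| + |h| ≤ (2 + |log ((cosh m - 1) / 4)| / m) * |L| := by
  have h_le_L : |h| ≤ |L| := abs_le_abs_of_cosh_eq hL
  have error_le : |log ((cosh m - 1) / 4)| ≤ |log ((cosh m - 1) / 4)| / m * |L| := by
    rw [div_mul_eq_mul_div, le_div_iff₀ hm]
    exact mul_le_mul_of_nonneg_left (hmh.trans h_le_L) (abs_nonneg _)
  linarith [abs_add_abs_le_add_abs_log_of_cosh_eq hm hmh hL]

end

/-- two-sided comparison of the length `L` of a geodesic arc with
`|ρ₁| + |ρ₂| + h`, with constants depending only on the lower bound `m ≤ h`. -/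
theorem arc_length_two_sided_comparison (m : ℝ) (hm : 0 < m) :
    ∃ c₁ c₂ : ℝ, 0 < c₁ ∧ c₁ ≤ c₂ ∧
      ∀ ρ₁ ρ₂ h L : ℝ, m ≤ h → 0 ≤ L →
        Real.cosh L =
          Real.cosh ρ₁ * Real.cosh ρ₂ * Real.cosh h - Real.sinh ρ₁ * Real.sinh ρ₂ →
        c₁ * (|ρ₁| + |ρ₂| + h) ≤ L ∧ L ≤ c₂ * (|ρ₁| + |ρ₂| + h) := by
  let C : ℝ := 2 + |Real.log ((Real.cosh m - 1) / 4)| / m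
  have two_le_C : 2 ≤ C := le_add_of_nonneg_right (by positivity)
  have C_pos : 0 < C := two_pos.trans_le two_le_C
  refine ⟨C⁻¹, 1, inv_pos.2 C_pos, inv_le_one_of_one_le₀ (one_le_two.trans two_le_C), ?_⟩
  intro ρ₁ ρ₂ h L hmh hL cosh_L
  have abs_h : |h| = h := abs_of_pos (hm.trans_le hmh)
  have lower := abs_add_le_mul_abs_of_cosh_eq hm (hmh.trans_eq abs_h.symm) cosh_L
  have upper := abs_le_abs_add_of_cosh_eq cosh_L
  rw [abs_h, abs_of_nonneg hL] at lower upper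
  exact ⟨(inv_mul_le_iff₀ C_pos).2 lower, upper.trans_eq (one_mul _).symm⟩
end

section
/- Let 0 < a ≤ a', 0 ≤ c ≤ c', 0 ≤ d ≤ d' be real numbers, and let L ≥ 0 and L' ≥ 0 satisfy (cosh L)² = N(a,c,d)/sinh(a/2)² and (cosh L')² = N(a',c',d')/sinh(a'/2)². Then cosh L / cosh L' ≤ sinh(a'/2) / sinh(a/2). -/
/-- The quantity `N(a,c,d)` appearing in Case 2 of the proof of Lemma 3.1. -/
noncomputable def pantsN (a c d : ℝ) : ℝ :=
  Real.cosh (d / 2) ^ 2 + Real.cosh (a / 2) ^ 2 + Real.cosh (c / 2) ^ 2 +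
    2 * Real.cosh (d / 2) * Real.cosh (a / 2) * Real.cosh (c / 2) - 1

theorem cosh_half_le_cosh_half {x y : ℝ} (h : |x| ≤ |y|) :
    Real.cosh (x / 2) ≤ Real.cosh (y / 2) := by
  rw [Real.cosh_le_cosh, abs_div, abs_div]
  gcongr

theorem pantsN_le_pantsN {a a' c c' d d' : ℝ}
    (ha : |a| ≤ |a'|) (hc : |c| ≤ |c'|) (hd : |d| ≤ |d'|) :
    pantsN a c d ≤ pantsN a' c' d' := by
  have cosh_a := cosh_half_le_cosh_half ha
  have cosh_c := cosh_half_le_cosh_half hc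
  have cosh_d := cosh_half_le_cosh_half hd
  unfold pantsN
  gcongr

theorem mul_eq_sqrt_of_sq_eq_div_sq {x s N : ℝ} (hx : 0 ≤ x) (hs : 0 < s)
    (h : x ^ 2 = N / s ^ 2) : x * s = √N := by
  rw [eq_div_iff (pow_ne_zero 2 hs.ne'), ← mul_pow] at h
  rw [← h, Real.sqrt_sq (mul_nonneg hx hs.le)]

/-- estimate (13) in Case 2 of the proof of Lemma 3.1. -/
theorem cosh_ratio_le_sinh_ratio (a a' c c' d d' L L' : ℝ)
    (ha : 0 < a) (ha' : a ≤ a') (hc : 0 ≤ c) (hc' : c ≤ c') (hd : 0 ≤ d) (hd' : d ≤ d')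
    (hL : 0 ≤ L) (hL' : 0 ≤ L')
    (hcoshL : Real.cosh L ^ 2 = pantsN a c d / Real.sinh (a / 2) ^ 2)
    (hcoshL' : Real.cosh L' ^ 2 = pantsN a' c' d' / Real.sinh (a' / 2) ^ 2) :
    Real.cosh L / Real.cosh L' ≤ Real.sinh (a' / 2) / Real.sinh (a / 2) := by
  have sinh_pos : 0 < Real.sinh (a / 2) := Real.sinh_pos_iff.2 (half_pos ha)
  have sinh_pos' : 0 < Real.sinh (a' / 2) := Real.sinh_pos_iff.2 (half_pos (ha.trans_le ha'))
  rw [div_le_div_iff₀ (Real.cosh_pos L') sinh_pos]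
  calc
    Real.cosh L * Real.sinh (a / 2) = √(pantsN a c d) :=
      mul_eq_sqrt_of_sq_eq_div_sq (Real.cosh_pos L).le sinh_pos hcoshL
    _ ≤ √(pantsN a' c' d') := Real.sqrt_le_sqrt <|
      pantsN_le_pantsN (abs_le_abs_of_nonneg ha.le ha') (abs_le_abs_of_nonneg hc hc')
        (abs_le_abs_of_nonneg hd hd')
    _ = Real.cosh L' * Real.sinh (a' / 2) :=
      (mul_eq_sqrt_of_sq_eq_div_sq (Real.cosh_pos L').le sinh_pos' hcoshL').symm
    _ = Real.sinh (a' / 2) * Real.cosh L' := mul_comm _ _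
end

section
/- Let a > 0 be a real number with sinh(a/2) ≤ 2, let c and d be real numbers, and let L ≥ 0 satisfy (cosh L)² = N(a,c,d)/sinh(a/2)². Then N(a,c,d) ≥ 4, cosh L ≥ 2/sinh(a/2), and L ≥ log( 2 / sinh(a/2) ). -/
theorem four_le_pantsN (a c d : ℝ) : 4 ≤ pantsN a c d := by
  have ha := Real.one_le_cosh (a / 2)
  have hc := Real.one_le_cosh (c / 2)
  have hd := Real.one_le_cosh (d / 2)
  calc (4 : ℝ) = 1 ^ 2 + 1 ^ 2 + 1 ^ 2 + 2 * 1 * 1 * 1 - 1 := by norm_num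
    _ ≤ pantsN a c d := by unfold pantsN; gcongr

theorem cosh_le_exp_abs_s11 (x : ℝ) : Real.cosh x ≤ Real.exp |x| := by
  rw [← Real.cosh_abs, ← Real.cosh_add_sinh |x|]
  exact le_add_of_nonneg_right (Real.sinh_nonneg_iff.mpr (abs_nonneg x))

theorem log_cosh_le_abs (x : ℝ) : Real.log (Real.cosh x) ≤ |x| :=
  (Real.log_le_iff_le_exp (Real.cosh_pos x)).mpr (cosh_le_exp_abs_s11 x)

theorem perp_self_lower_bound_general (a c d L : ℝ) (ha : 0 < a) (hL : 0 ≤ L)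
    (hcoshL : Real.cosh L ^ 2 = pantsN a c d / Real.sinh (a / 2) ^ 2) :
    4 ≤ pantsN a c d ∧ 2 / Real.sinh (a / 2) ≤ Real.cosh L ∧
      Real.log (2 / Real.sinh (a / 2)) ≤ L := by
  have hN : 4 ≤ pantsN a c d := four_le_pantsN a c d
  have hsinh : 0 < Real.sinh (a / 2) := Real.sinh_pos_iff.mpr (half_pos ha)
  have hcosh : 2 / Real.sinh (a / 2) ≤ Real.cosh L := by
    refine le_of_sq_le_sq ?_ (Real.cosh_pos L).le
    calc (2 / Real.sinh (a / 2)) ^ 2 = 4 / Real.sinh (a / 2) ^ 2 := by rw [div_pow]; norm_num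
      _ ≤ pantsN a c d / Real.sinh (a / 2) ^ 2 := by gcongr
      _ = Real.cosh L ^ 2 := hcoshL.symm
  refine ⟨hN, hcosh, ?_⟩
  calc Real.log (2 / Real.sinh (a / 2)) ≤ Real.log (Real.cosh L) :=
        Real.log_le_log (div_pos two_pos hsinh) hcosh
    _ ≤ |L| := log_cosh_le_abs L
    _ = L := abs_of_nonneg hL

/-- the lower bound `L ≥ log (2 / sinh (a/2))` from Subcase 2-2 of the proof
of Lemma 3.1. -/
theorem perp_self_lower_bound (a c d L : ℝ) (ha : 0 < a) (ha2 : Real.sinh (a / 2) ≤ 2)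
    (hL : 0 ≤ L) (hcoshL : Real.cosh L ^ 2 = pantsN a c d / Real.sinh (a / 2) ^ 2) :
    4 ≤ pantsN a c d ∧ 2 / Real.sinh (a / 2) ≤ Real.cosh L ∧
      Real.log (2 / Real.sinh (a / 2)) ≤ L :=
  perp_self_lower_bound_general a c d L ha hL hcoshL
end
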